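/- Let s > 1, q ∈ [1,∞), let ω be an s-admissible weight on ℝ^d, let f ∈ L¹(ℝ^d) have compact support, and let (x₀, ξ₀) ∈ ℝ^d × (ℝ^d ∖ {0}). Then (x₀, ξ₀) ∉ WF_{FL^q_ω}(f) if and only if there exist an invertible d×d real matrix A, a constant c ∈ (0, 2π), a point x₁ ∈ ℝ^d, an s-cutoff φ with φ(x₀) ≠ 0 whose support is contained in the interior of x₁ + A([0,1]^d), and an open cone Γ containing ξ₀, such that Σ_{λ ∈ (c·(Aᵀ)^{−1}(ℤ^d)) ∩ Γ} (|ℱ(φf)(λ)|·ω(λ))^q < ∞. -/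

import Mathlib

open MeasureTheory Complex Set
open scoped ENNReal RealInnerProductSpace NNReal

noncomputable section

namespace Paper

variable {d : ℕ}

/-- The Fourier transform, normalized by `(2π)^{-d/2}`. -/
def FT (f : EuclideanSpace ℝ (Fin d) → ℂ) (ξ : EuclideanSpace ℝ (Fin d)) : ℂ :=
  ((2 * Real.pi) ^ (-(d : ℝ) / 2) : ℝ) *
    ∫ x, f x * Complex.exp (-(⟪x, ξ⟫ : ℝ) * Complex.I)

/-- The short-time Fourier transform `V_φ f (x, ξ)`. -/
def STFT (φ f : EuclideanSpace ℝ (Fin d) → ℂ) (x ξ : EuclideanSpace ℝ (Fin d)) : ℂ :=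
  ((2 * Real.pi) ^ (-(d : ℝ) / 2) : ℝ) *
    ∫ y, f y * (starRingEnd ℂ) (φ (y - x)) * Complex.exp (-(⟪ξ, y⟫ : ℝ) * Complex.I)

/-- A cone in `ℝ^d ∖ {0}`. -/
def IsCone (Γ : Set (EuclideanSpace ℝ (Fin d))) : Prop :=
  (0 : EuclideanSpace ℝ (Fin d)) ∉ Γ ∧ ∀ ξ ∈ Γ, ∀ t : ℝ, 0 < t → t • ξ ∈ Γ

/-- An `s`-cutoff: smooth, compactly supported, with Fourier transform decaying faster
than every `exp (-N |ξ|^{1/s})`. -/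
def IsSCutoff (s : ℝ) (φ : EuclideanSpace ℝ (Fin d) → ℂ) : Prop :=
  ContDiff ℝ (⊤ : ℕ∞) φ ∧ HasCompactSupport φ ∧
    ∀ N : ℝ, 0 < N → ∃ C : ℝ, 0 < C ∧
      ∀ ξ, ‖FT φ ξ‖ ≤ C * Real.exp (-N * ‖ξ‖ ^ (1 / s))

/-- An `s`-admissible weight: positive, measurable, and moderate with respect to an even
submultiplicative weight of sub-exponential growth of order `1/s`. -/
def IsSAdmissible (s : ℝ) (ω : EuclideanSpace ℝ (Fin d) → ℝ) : Prop :=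
  Measurable ω ∧ (∀ x, 0 < ω x) ∧
    ∃ v : EuclideanSpace ℝ (Fin d) → ℝ, Measurable v ∧ (∀ x, 0 < v x) ∧
      (∀ x, v (-x) = v x) ∧ (∀ x y, v (x + y) ≤ v x * v y) ∧
      ∃ C₀ k₀ C₁ : ℝ, 0 < C₀ ∧ 0 < k₀ ∧ 0 < C₁ ∧
        (∀ ξ, v ξ ≤ C₀ * Real.exp (k₀ * ‖ξ‖ ^ (1 / s))) ∧
        ∀ x y, ω (x + y) ≤ C₁ * v x * ω y

/-- The Fourier–Lebesgue seminorm `( ∫_Γ (|f̂| ω)^q )^{1/q}` (ess-sup when `q = ∞`). -/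
def FLSemi (ω : EuclideanSpace ℝ (Fin d) → ℝ) (q : ℝ≥0∞)
    (f : EuclideanSpace ℝ (Fin d) → ℂ) (Γ : Set (EuclideanSpace ℝ (Fin d))) : ℝ≥0∞ :=
  eLpNorm (fun ξ => ‖FT f ξ‖ * ω ξ) q (volume.restrict Γ)

/-- The Fourier–Lebesgue wave-front set `WF_{FL^q_ω} f`. -/
def WF_FL (s : ℝ) (q : ℝ≥0∞) (ω : EuclideanSpace ℝ (Fin d) → ℝ)
    (f : EuclideanSpace ℝ (Fin d) → ℂ) :
    Set (EuclideanSpace ℝ (Fin d) × EuclideanSpace ℝ (Fin d)) :=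
  {z | z.2 ≠ 0 ∧ ∀ φ : EuclideanSpace ℝ (Fin d) → ℂ, IsSCutoff s φ → φ z.1 ≠ 0 →
    ∀ Γ : Set (EuclideanSpace ℝ (Fin d)), IsOpen Γ → IsCone Γ → z.2 ∈ Γ →
      FLSemi ω q (fun x => φ x * f x) Γ = ∞}

/-- The `s`-wave-front set `WF_s f`. -/
def WFs (s : ℝ) (f : EuclideanSpace ℝ (Fin d) → ℂ) :
    Set (EuclideanSpace ℝ (Fin d) × EuclideanSpace ℝ (Fin d)) :=
  {z | z.2 ≠ 0 ∧ ¬ ∃ φ : EuclideanSpace ℝ (Fin d) → ℂ, IsSCutoff s φ ∧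
    (∃ U : Set (EuclideanSpace ℝ (Fin d)), IsOpen U ∧ z.1 ∈ U ∧ ∀ x ∈ U, φ x = 1) ∧
    ∃ Γ : Set (EuclideanSpace ℝ (Fin d)), IsOpen Γ ∧ IsCone Γ ∧ z.2 ∈ Γ ∧
      ∃ C k : ℝ, 0 < C ∧ 0 < k ∧
        ∀ ξ ∈ Γ, ‖FT (fun x => φ x * f x) ξ‖ ≤ C * Real.exp (-k * ‖ξ‖ ^ (1 / s))}

/-- The mixed modulation-space seminorm
`( ∫_Γ ( ∫ |V_g F(x,ξ)|^p dx )^{q/p} ω(ξ)^q dξ )^{1/q}` with the usual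
ess-sup interpretations for `p = ∞` or `q = ∞`. -/
def ModSemi (g F : EuclideanSpace ℝ (Fin d) → ℂ) (ω : EuclideanSpace ℝ (Fin d) → ℝ)
    (p q : ℝ≥0∞) (Γ : Set (EuclideanSpace ℝ (Fin d))) : ℝ≥0∞ :=
  if q = ∞ then
    essSup (fun ξ => eLpNorm (fun x => STFT g F x ξ) p volume * ENNReal.ofReal (ω ξ))
      (volume.restrict Γ)
  else
    (∫⁻ ξ in Γ, (eLpNorm (fun x => STFT g F x ξ) p volume * ENNReal.ofReal (ω ξ)) ^ q.toReal) ^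
      (1 / q.toReal)

/-- The modulation wave-front set `WF_{M^{p,q}_ω} f`, with window `g`. -/
def WF_M (s : ℝ) (p q : ℝ≥0∞) (ω : EuclideanSpace ℝ (Fin d) → ℝ)
    (g f : EuclideanSpace ℝ (Fin d) → ℂ) :
    Set (EuclideanSpace ℝ (Fin d) × EuclideanSpace ℝ (Fin d)) :=
  {z | z.2 ≠ 0 ∧ ∀ φ : EuclideanSpace ℝ (Fin d) → ℂ, IsSCutoff s φ → φ z.1 ≠ 0 →
    ∀ Γ : Set (EuclideanSpace ℝ (Fin d)), IsOpen Γ → IsCone Γ → z.2 ∈ Γ →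
      ModSemi g (fun x => φ x * f x) ω p q Γ = ∞}

/-- Reinterpret a plain vector as a point of Euclidean space. -/
def toE (x : Fin d → ℝ) : EuclideanSpace ℝ (Fin d) :=
  (EuclideanSpace.equiv (Fin d) ℝ).symm x

/-- The point `A k` of the lattice `A(ℤ^d)`. -/
def latPt (A : Matrix (Fin d) (Fin d) ℝ) (k : Fin d → ℤ) : EuclideanSpace ℝ (Fin d) :=
  toE (A.mulVec fun i => (k i : ℝ))

/-- The point `c (Aᵀ)⁻¹ k` of the dual lattice `c (Aᵀ)⁻¹(ℤ^d)`. -/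
def dualLatPt (A : Matrix (Fin d) (Fin d) ℝ) (c : ℝ) (k : Fin d → ℤ) :
    EuclideanSpace ℝ (Fin d) :=
  toE (c • (A.transpose⁻¹.mulVec fun i => (k i : ℝ)))

/-- The parallelepiped `x₁ + A([0,1]^d)`. -/
def lattPara (A : Matrix (Fin d) (Fin d) ℝ) (x₁ : EuclideanSpace ℝ (Fin d)) :
    Set (EuclideanSpace ℝ (Fin d)) :=
  (fun t : Fin d → ℝ => x₁ + toE (A.mulVec t)) '' (Set.univ.pi fun _ => Set.Icc 0 1)

/-- The adjoint short-time Fourier transform `V*_φ F`. -/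
def VStar (φ : EuclideanSpace ℝ (Fin d) → ℂ)
    (F : EuclideanSpace ℝ (Fin d) × EuclideanSpace ℝ (Fin d) → ℂ)
    (t : EuclideanSpace ℝ (Fin d)) : ℂ :=
  ((2 * Real.pi) ^ (-(d : ℝ) / 2) : ℝ) *
    ∫ z : EuclideanSpace ℝ (Fin d) × EuclideanSpace ℝ (Fin d),
      F z * Complex.exp ((⟪z.2, t⟫ : ℝ) * Complex.I) * φ (t - z.1)


/-- The basic kernel. -/
def ker (s : ℝ) (x : EuclideanSpace ℝ (Fin d)) : ℝ := Real.exp (-‖x‖ ^ (1 / s))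

lemma ker_pos (s : ℝ) (x : EuclideanSpace ℝ (Fin d)) : 0 < ker s x := Real.exp_pos _

lemma ker_continuous {s : ℝ} (hs : 1 < s) :
    Continuous (ker s : EuclideanSpace ℝ (Fin d) → ℝ) := by
  unfold ker
  have : 0 ≤ 1 / s := by positivity
  exact Real.continuous_exp.comp ((continuous_norm.rpow_const (fun _ => Or.inr this)).neg)

lemma rpow_sub {s : ℝ} (hs : 1 < s) {a b c : ℝ} (ha : 0 ≤ a) (hb : 0 ≤ b) (hc : 0 ≤ c)
    (h : a ≤ b + c) : a ^ (1 / s) ≤ b ^ (1 / s) + c ^ (1 / s) := by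
  have h0 : 0 ≤ 1 / s := by positivity
  have h1 : 1 / s ≤ 1 := by rw [div_le_one (by linarith)]; exact hs.le
  exact (Real.rpow_le_rpow ha h h0).trans (Real.rpow_add_le_add_rpow hb hc h0 h1)

lemma ker_lintegral {s : ℝ} (hs : 1 < s) :
    ∫⁻ x : EuclideanSpace ℝ (Fin d), ENNReal.ofReal (ker s x) < ∞ := by
  -- compare with `(1 + ‖x‖)^(-(d+1))`
  have h0 : 0 < 1 / s := by positivity
  obtain ⟨n, hn⟩ := exists_nat_ge (s * (d + 1))
  have key : ∀ y : ℝ, 0 ≤ y → Real.exp (-y ^ (1 / s)) ≤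
      (Real.exp 1 * n.factorial) * (1 + y) ^ (-((d : ℝ) + 1)) := by
    intro y hy
    have h1 : (1 + y) ^ (1 / s) ≤ 1 + y ^ (1 / s) := by
      have := rpow_sub hs (by positivity : 0 ≤ 1 + y) zero_le_one hy le_rfl
      simpa using this
    have h2 : (1 + y) ^ ((d : ℝ) + 1) ≤ ((1 + y) ^ (1 / s)) ^ n := by
      rw [← Real.rpow_natCast, ← Real.rpow_mul (by positivity)]
      apply Real.rpow_le_rpow_of_exponent_le (by linarith)
      rw [one_div, inv_mul_eq_div, le_div_iff₀ (by linarith)]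
      linarith
    have h3 := Real.pow_div_factorial_le_exp ((1 + y) ^ (1 / s)) (by positivity) n
    have h4 : Real.exp ((1 + y) ^ (1 / s)) ≤ Real.exp 1 * Real.exp (y ^ (1 / s)) := by
      rw [← Real.exp_add]; exact Real.exp_le_exp.mpr h1
    rw [div_le_iff₀ (by positivity)] at h3
    rw [Real.exp_neg, Real.rpow_neg (by positivity), ← div_eq_mul_inv,
      le_div_iff₀ (by positivity), inv_mul_le_iff₀ (by positivity)]
    calc _ ≤ _ := h2
      _ ≤ _ := h3
      _ ≤ (Real.exp 1 * Real.exp (y ^ (1 / s))) * n.factorial := by gcongr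
      _ = _ := by ring
  have hi : Integrable (fun x : EuclideanSpace ℝ (Fin d) => (1 + ‖x‖) ^ (-((d : ℝ) + 1))) := by
    apply integrable_one_add_norm
    simp
  have hi2 := (hi.const_mul (Real.exp 1 * n.factorial)).lintegral_lt_top
  refine lt_of_le_of_lt (lintegral_mono fun x => ?_) hi2
  exact ENNReal.ofReal_le_ofReal (key _ (norm_nonneg x))

/-- Uniform integrability of the kernel. -/
lemma ker_unif_volume {s : ℝ} (hs : 1 < s) : ∃ B : ℝ≥0∞, B ≠ ∞ ∧
    ∀ ξ : EuclideanSpace ℝ (Fin d), ∫⁻ η, ENNReal.ofReal (ker s (ξ - η)) ≤ B := by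
  refine ⟨_, (ker_lintegral (d := d) hs).ne, fun ξ => le_of_eq ?_⟩
  exact lintegral_sub_left_eq_self (fun x => ENNReal.ofReal (ker s x)) ξ

lemma map_volume (M : (Fin d → ℝ) ≃L[ℝ] EuclideanSpace ℝ (Fin d)) :
    ∃ a : ℝ≥0∞, a ≠ 0 ∧ a ≠ ∞ ∧
      Measure.map M (volume : Measure (Fin d → ℝ)) = a • volume := by
  have : (Measure.map M (volume : Measure (Fin d → ℝ))).IsAddHaarMeasure :=
    M.isAddHaarMeasure_map volume
  refine ⟨_, ?_, ?_, Measure.isAddLeftInvariant_eq_smul _ volume⟩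
  · have := Measure.addHaarScalarFactor_pos_of_isAddHaarMeasure
      (Measure.map M (volume : Measure (Fin d → ℝ))) volume
    exact_mod_cast this.ne'
  · exact ENNReal.coe_ne_top

/-- Uniform summability of the kernel over a lattice. -/
lemma ker_unif_lattice {s : ℝ} (hs : 1 < s)
    (M : (Fin d → ℝ) ≃L[ℝ] EuclideanSpace ℝ (Fin d)) : ∃ B : ℝ≥0∞, B ≠ ∞ ∧
    ∀ ξ : EuclideanSpace ℝ (Fin d),
      ∫⁻ k : Fin d → ℤ, ENNReal.ofReal (ker s (ξ - M (fun i => (k i : ℝ)))) ∂Measure.count ≤ B := by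
  obtain ⟨a, ha0, ha, hM⟩ := map_volume M
  set D : ℝ := ‖(M : (Fin d → ℝ) →L[ℝ] EuclideanSpace ℝ (Fin d))‖ with hD
  have hD0 : 0 ≤ D := norm_nonneg _
  set K : ℝ := Real.exp (D ^ (1 / s))
  refine ⟨ENNReal.ofReal K * (a * ∫⁻ x : EuclideanSpace ℝ (Fin d), ENNReal.ofReal (ker s x)),
    ENNReal.mul_ne_top ENNReal.ofReal_ne_top
      (ENNReal.mul_ne_top ha (ker_lintegral hs).ne), fun ξ => ?_⟩
  rw [lintegral_count]
  set S : (Fin d → ℤ) → Set (Fin d → ℝ) := fun k =>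
    Set.univ.pi fun i => Set.Ico (k i : ℝ) (k i + 1)
  have hS : ∀ k, MeasurableSet (S k) := fun k => MeasurableSet.univ_pi fun i => measurableSet_Ico
  have hv : ∀ k, volume (S k) = 1 := fun k => by
    simp [S, Real.volume_pi_Ico]
  have hdis : Pairwise (Function.onFun Disjoint S) := by
    intro k l hkl
    rw [Function.onFun, Set.disjoint_left]
    intro t ht ht'
    apply hkl
    funext i
    have h1 := ht i (Set.mem_univ i)
    have h2 := ht' i (Set.mem_univ i)
    rw [← Int.floor_eq_iff.mpr h1, ← Int.floor_eq_iff.mpr h2]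
  have hpt : ∀ k, ∀ t ∈ S k, ker s (ξ - M (fun i => (k i : ℝ))) ≤ K * ker s (ξ - M t) := by
    intro k t ht
    unfold ker
    rw [← Real.exp_add]
    apply Real.exp_le_exp.mpr
    have hle : ‖M t - M (fun i => (k i : ℝ))‖ ≤ D := by
      rw [← map_sub]
      refine ((M : (Fin d → ℝ) →L[ℝ] EuclideanSpace ℝ (Fin d)).le_opNorm _).trans ?_
      refine mul_le_of_le_one_right hD0 ((pi_norm_le_iff_of_nonneg zero_le_one).mpr fun i => ?_)
      have := ht i (Set.mem_univ i)
      rw [Real.norm_eq_abs, abs_le]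
      simp only [Pi.sub_apply]
      constructor <;> linarith [this.1, this.2]
    have := rpow_sub hs (norm_nonneg (ξ - M t)) hD0
      (norm_nonneg (ξ - M (fun i => (k i : ℝ)))) (by
        have h3 : ξ - M t = -(M t - M (fun i => (k i : ℝ))) + (ξ - M (fun i => (k i : ℝ))) := by
          abel
        rw [h3]
        refine (norm_add_le _ _).trans ?_
        rw [norm_neg]
        gcongr)
    linarith
  calc ∑' k : Fin d → ℤ, ENNReal.ofReal (ker s (ξ - M (fun i => (k i : ℝ))))
      = ∑' k, ∫⁻ t in S k, ENNReal.ofReal (ker s (ξ - M (fun i => (k i : ℝ)))) := by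
        congr 1; funext k; simp [hv]
    _ ≤ ∑' k, ∫⁻ t in S k, ENNReal.ofReal (K * ker s (ξ - M t)) := by
        refine ENNReal.tsum_le_tsum fun k => setLIntegral_mono' (hS k) fun t ht => ?_
        exact ENNReal.ofReal_le_ofReal (hpt k t ht)
    _ = ∫⁻ t in ⋃ k, S k, ENNReal.ofReal (K * ker s (ξ - M t)) :=
        (lintegral_iUnion hS hdis _).symm
    _ ≤ ∫⁻ t, ENNReal.ofReal (K * ker s (ξ - M t)) := setLIntegral_le_lintegral _ _
    _ = ENNReal.ofReal K * ∫⁻ t, ENNReal.ofReal (ker s (ξ - M t)) := by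
        rw [← lintegral_const_mul' _ _ ENNReal.ofReal_ne_top]
        congr 1; funext t; rw [ENNReal.ofReal_mul (Real.exp_pos _).le]
    _ = ENNReal.ofReal K * ∫⁻ x, ENNReal.ofReal (ker s (ξ - x)) ∂(Measure.map M volume) := by
        rw [lintegral_map _ M.continuous.measurable]
        exact ((ker_continuous hs).comp (continuous_const.sub continuous_id)).measurable.ennreal_ofReal
    _ = _ := by
        rw [hM, lintegral_smul_measure,
          lintegral_sub_left_eq_self (fun x => ENNReal.ofReal (ker s x)) ξ]
        rfl

/-- Schur test. -/
lemma schur {X Y : Type*} [MeasurableSpace X] [MeasurableSpace Y] (μ : Measure X) (ν : Measure Y)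
    [SFinite μ] [SFinite ν] (q : ℝ) (hq : 1 ≤ q) (h : X → ℝ≥0∞) (hh : Measurable h)
    (K : Y → X → ℝ≥0∞) (hK : Measurable (Function.uncurry K)) (B₁ B₂ : ℝ≥0∞)
    (h1 : ∀ y, ∫⁻ x, K y x ∂μ ≤ B₁) (h2 : ∀ x, ∫⁻ y, K y x ∂ν ≤ B₂) :
    ∫⁻ y, (∫⁻ x, h x * K y x ∂μ) ^ q ∂ν ≤ B₁ ^ (q - 1) * (B₂ * ∫⁻ x, h x ^ q ∂μ) := by
  have hq0 : 0 < q := by linarith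
  have hKy : ∀ y, Measurable (K y) := fun y => hK.comp (measurable_const.prodMk measurable_id)
  have hKx : ∀ x, Measurable (fun y => K y x) :=
    fun x => hK.comp (measurable_id.prodMk measurable_const)
  have hJ : ∀ y, (∫⁻ x, h x * K y x ∂μ) ^ q ≤ B₁ ^ (q - 1) * ∫⁻ x, h x ^ q * K y x ∂μ := by
    intro y
    have := eLpNorm_le_eLpNorm_mul_rpow_measure_univ (μ := μ.withDensity (K y))
      (f := h) (p := 1) (q := ENNReal.ofReal q) (by simpa using ENNReal.ofReal_le_ofReal hq)
      hh.aestronglyMeasurable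
    rw [eLpNorm_one_eq_lintegral_enorm, eLpNorm_eq_lintegral_rpow_enorm_toReal
      (by simpa using hq0) ENNReal.ofReal_ne_top, ENNReal.toReal_ofReal hq0.le] at this
    simp only [enorm_eq_self] at this
    rw [lintegral_withDensity_eq_lintegral_mul _ (hKy y) hh,
      lintegral_withDensity_eq_lintegral_mul _ (hKy y) (hh.pow_const q),
      withDensity_apply _ MeasurableSet.univ, Measure.restrict_univ] at this
    have h3 := ENNReal.rpow_le_rpow this hq0.le
    rw [ENNReal.mul_rpow_of_nonneg _ _ hq0.le, ← ENNReal.rpow_mul, ← ENNReal.rpow_mul] at h3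
    have e1 : 1 / q * q = 1 := by field_simp
    have e2 : (1 / (1 : ℝ≥0∞).toReal - 1 / q) * q = q - 1 := by
      simp; field_simp
    rw [e1, e2, ENNReal.rpow_one] at h3
    simp only [Pi.mul_apply, mul_comm (K y _)] at h3
    refine h3.trans ?_
    rw [mul_comm]
    gcongr
    exact h1 y
  have hm : Measurable (Function.uncurry fun y x => h x ^ q * K y x) :=
    ((hh.pow_const q).comp measurable_snd).mul hK
  calc _ ≤ ∫⁻ y, B₁ ^ (q - 1) * ∫⁻ x, h x ^ q * K y x ∂μ ∂ν := lintegral_mono hJ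
    _ = B₁ ^ (q - 1) * ∫⁻ y, ∫⁻ x, h x ^ q * K y x ∂μ ∂ν :=
        lintegral_const_mul _ hm.lintegral_prod_right'
    _ = B₁ ^ (q - 1) * ∫⁻ x, ∫⁻ y, h x ^ q * K y x ∂ν ∂μ := by
        rw [lintegral_lintegral_swap hm.aemeasurable]
    _ ≤ B₁ ^ (q - 1) * ∫⁻ x, B₂ * h x ^ q ∂μ := by
        gcongr with x
        rw [lintegral_const_mul _ (hKx x), mul_comm]
        gcongr
        exact h2 x
    _ = _ := by rw [lintegral_const_mul _ (hh.pow_const q)]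

lemma ker_neg (s : ℝ) (x : EuclideanSpace ℝ (Fin d)) : ker s (-x) = ker s x := by simp [ker]

lemma ker_sub_comm (s : ℝ) (x y : EuclideanSpace ℝ (Fin d)) : ker s (x - y) = ker s (y - x) := by
  rw [← ker_neg, neg_sub]

lemma cone_shrink (Γ : Set (EuclideanSpace ℝ (Fin d))) (hΓo : IsOpen Γ) (hΓ : IsCone Γ)
    (ξ₀ : EuclideanSpace ℝ (Fin d)) (hξ₀ : ξ₀ ∈ Γ) :
    ∃ (Γ' : Set (EuclideanSpace ℝ (Fin d))) (δ : ℝ), 0 < δ ∧ IsOpen Γ' ∧ IsCone Γ' ∧ ξ₀ ∈ Γ' ∧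
      ∀ ξ ∈ Γ', ∀ η ∉ Γ, δ * ‖ξ‖ ≤ ‖ξ - η‖ := by
  have hne : ξ₀ ≠ 0 := fun h => hΓ.1 (h ▸ hξ₀)
  have hn : 0 < ‖ξ₀‖ := norm_pos_iff.mpr hne
  set e := ‖ξ₀‖⁻¹ • ξ₀ with he
  have heΓ : e ∈ Γ := hΓ.2 _ hξ₀ _ (by positivity)
  obtain ⟨ε, hε, hball⟩ := Metric.isOpen_iff.mp hΓo e heΓ
  refine ⟨{ξ | ξ ≠ 0 ∧ ‖‖ξ‖⁻¹ • ξ - e‖ < ε / 2}, ε / 2, by positivity, ?_, ?_, ?_, ?_⟩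
  · have hc : ContinuousOn (fun ξ : EuclideanSpace ℝ (Fin d) => ‖‖ξ‖⁻¹ • ξ - e‖) {0}ᶜ := by
      apply ContinuousOn.norm
      apply ContinuousOn.sub _ continuousOn_const
      refine ContinuousOn.smul (f := fun x : EuclideanSpace ℝ (Fin d) => ‖x‖⁻¹)
        (g := fun x => x) ?_ continuousOn_id
      exact continuousOn_id.norm.inv₀ (fun x hx => by simpa using hx)
    exact hc.isOpen_inter_preimage isOpen_compl_singleton isOpen_Iio
  · refine ⟨fun h => h.1 rfl, fun ξ hξ t ht => ⟨smul_ne_zero ht.ne' hξ.1, ?_⟩⟩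
    have : ‖t • ξ‖⁻¹ • (t • ξ) = ‖ξ‖⁻¹ • ξ := by
      rw [norm_smul, Real.norm_of_nonneg ht.le, smul_smul]
      congr 1
      field_simp
    rw [this]
    exact hξ.2
  · refine ⟨hne, ?_⟩
    rw [← he]; simpa using hε
  · intro ξ hξ η hη
    by_contra! hlt
    have hξn : 0 < ‖ξ‖ := norm_pos_iff.mpr hξ.1
    apply hη
    have h1 : ‖ξ‖⁻¹ • η ∈ Γ := by
      apply hball
      rw [Metric.mem_ball, dist_eq_norm]
      have h2 : ‖ξ‖⁻¹ • η - e = -(‖ξ‖⁻¹ • (ξ - η)) + (‖ξ‖⁻¹ • ξ - e) := by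
        rw [smul_sub]; abel
      have h3 : ‖‖ξ‖⁻¹ • (ξ - η)‖ < ε / 2 := by
        rw [norm_smul, norm_inv, norm_norm, inv_mul_lt_iff₀ hξn]
        linarith
      rw [h2]
      refine (norm_add_le _ _).trans_lt ?_
      rw [norm_neg]
      have := hξ.2
      linarith
    have := hΓ.2 _ h1 ‖ξ‖ hξn
    rwa [smul_smul, mul_inv_cancel₀ hξn.ne', one_smul] at this

lemma weight_bounds {s : ℝ} (hs : 1 < s)
    (ω : EuclideanSpace ℝ (Fin d) → ℝ) (hω : IsSAdmissible s ω)
    (κ : EuclideanSpace ℝ (Fin d) → ℝ)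
    (hκ : ∀ N : ℝ, 0 < N → ∃ C : ℝ, 0 < C ∧
      ∀ ξ, κ ξ ≤ C * Real.exp (-N * ‖ξ‖ ^ (1 / s))) (δ : ℝ) (hδ : 0 < δ) :
    ∃ A₁ A₂ : ℝ, 0 ≤ A₁ ∧ 0 ≤ A₂ ∧ (∀ ξ η, κ (ξ - η) * ω ξ ≤ A₁ * (ω η * ker s (ξ - η))) ∧
      ∀ ξ η, δ * ‖ξ‖ ≤ ‖ξ - η‖ → κ (ξ - η) * ω ξ ≤ A₂ * (ker s ξ * ker s (ξ - η)) := by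
  obtain ⟨hωm, hωpos, v, hvm, hvpos, hveven, hvsub, C₀, k₀, C₁, hC₀, hk₀, hC₁, hv, hmod⟩ := hω
  have hs0 : 0 < 1 / s := by positivity
  have hδs : 0 < δ ^ (1 / s) := by positivity
  obtain ⟨Ca, hCa, hκa⟩ := hκ (k₀ + 1) (by positivity)
  obtain ⟨Cb, hCb, hκb⟩ := hκ (1 + (k₀ + 1) / δ ^ (1 / s)) (by positivity)
  have hin : ∀ ξ η, κ (ξ - η) * ω ξ ≤ C₁ * C₀ * Ca * (ω η * ker s (ξ - η)) := by
    intro ξ η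
    have e1 : ω ξ ≤ C₁ * v (ξ - η) * ω η := by simpa using hmod (ξ - η) η
    have e2 := hv (ξ - η)
    have e3 := hκa (ξ - η)
    have e4 : Real.exp (-(k₀ + 1) * ‖ξ - η‖ ^ (1 / s)) * Real.exp (k₀ * ‖ξ - η‖ ^ (1 / s))
        = ker s (ξ - η) := by
      rw [ker, ← Real.exp_add]; congr 1; ring
    have := hωpos η
    calc _ ≤ (Ca * Real.exp (-(k₀ + 1) * ‖ξ - η‖ ^ (1 / s))) *
          (C₁ * (C₀ * Real.exp (k₀ * ‖ξ - η‖ ^ (1 / s))) * ω η) := by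
            apply mul_le_mul e3 _ (hωpos ξ).le (by positivity)
            refine e1.trans ?_
            gcongr
      _ = C₁ * C₀ * Ca * (ω η * (Real.exp (-(k₀ + 1) * ‖ξ - η‖ ^ (1 / s)) *
          Real.exp (k₀ * ‖ξ - η‖ ^ (1 / s)))) := by ring
      _ = _ := by rw [e4]
  have hout : ∀ ξ η, δ * ‖ξ‖ ≤ ‖ξ - η‖ →
      κ (ξ - η) * ω ξ ≤ (C₁ * C₀ * ω 0 * Cb) * (ker s ξ * ker s (ξ - η)) := by
    intro ξ η hle
    have e1 : ω ξ ≤ C₁ * v ξ * ω 0 := by simpa using hmod ξ 0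
    have e2 := hv ξ
    have e3 := hκb (ξ - η)
    have h0 := hωpos 0
    have e5 : ‖ξ‖ ^ (1 / s) ≤ ‖ξ - η‖ ^ (1 / s) / δ ^ (1 / s) := by
      rw [le_div_iff₀ hδs, mul_comm, ← Real.mul_rpow hδ.le (norm_nonneg _)]
      exact Real.rpow_le_rpow (by positivity) hle hs0.le
    have e4 : Real.exp (-(1 + (k₀ + 1) / δ ^ (1 / s)) * ‖ξ - η‖ ^ (1 / s)) *
        Real.exp (k₀ * ‖ξ‖ ^ (1 / s)) ≤ ker s ξ * ker s (ξ - η) := by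
      rw [ker, ker, ← Real.exp_add, ← Real.exp_add]
      apply Real.exp_le_exp.mpr
      have := mul_le_mul_of_nonneg_left e5 (by positivity : 0 ≤ k₀ + 1)
      have e6 : (1 + (k₀ + 1) / δ ^ (1 / s)) * ‖ξ - η‖ ^ (1 / s) =
        ‖ξ - η‖ ^ (1 / s) + (k₀ + 1) * (‖ξ - η‖ ^ (1 / s) / δ ^ (1 / s)) := by ring
      rw [neg_mul, e6]
      linarith
    calc _ ≤ (Cb * Real.exp (-(1 + (k₀ + 1) / δ ^ (1 / s)) * ‖ξ - η‖ ^ (1 / s))) *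
          (C₁ * (C₀ * Real.exp (k₀ * ‖ξ‖ ^ (1 / s))) * ω 0) := by
            apply mul_le_mul e3 _ (hωpos ξ).le (by positivity)
            refine e1.trans ?_
            gcongr
      _ = C₁ * C₀ * ω 0 * Cb *
          (Real.exp (-(1 + (k₀ + 1) / δ ^ (1 / s)) * ‖ξ - η‖ ^ (1 / s)) *
          Real.exp (k₀ * ‖ξ‖ ^ (1 / s))) := by ring
      _ ≤ _ := by gcongr
  have h00 := hωpos 0
  exact ⟨C₁ * C₀ * Ca, C₁ * C₀ * ω 0 * Cb, by positivity, by positivity, hin, hout⟩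

set_option maxHeartbeats 400000 in
/-- The transfer principle. -/
lemma transfer {X Y : Type*} [MeasurableSpace X] [MeasurableSpace Y] (μ : Measure X)
    (ν : Measure Y) [SFinite μ] [SFinite ν]
    (p : X → EuclideanSpace ℝ (Fin d)) (r : Y → EuclideanSpace ℝ (Fin d))
    (hp : Measurable p) (hr : Measurable r)
    (s q : ℝ) (hs : 1 < s) (hq : 1 ≤ q)
    (hμ : ∃ B : ℝ≥0∞, B ≠ ∞ ∧ ∀ ξ, ∫⁻ x, ENNReal.ofReal (ker s (ξ - p x)) ∂μ ≤ B)
    (hν : ∃ B : ℝ≥0∞, B ≠ ∞ ∧ ∀ ξ, ∫⁻ y, ENNReal.ofReal (ker s (ξ - r y)) ∂ν ≤ B)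
    (ω : EuclideanSpace ℝ (Fin d) → ℝ) (hω : IsSAdmissible s ω)
    (G H : EuclideanSpace ℝ (Fin d) → ℂ) (hG : Measurable G) (b : ℝ) (hb : ∀ ξ, ‖G ξ‖ ≤ b)
    (κ : EuclideanSpace ℝ (Fin d) → ℝ) (hκ0 : ∀ ξ, 0 ≤ κ ξ)
    (hκ : ∀ N : ℝ, 0 < N → ∃ C : ℝ, 0 < C ∧
      ∀ ξ, κ ξ ≤ C * Real.exp (-N * ‖ξ‖ ^ (1 / s)))
    (CH : ℝ≥0∞) (hCH : CH ≠ ∞)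
    (hH : ∀ y, ENNReal.ofReal ‖H (r y)‖ ≤
      CH * ∫⁻ x, ENNReal.ofReal (‖G (p x)‖ * κ (r y - p x)) ∂μ)
    (Γ : Set (EuclideanSpace ℝ (Fin d))) (hΓo : IsOpen Γ) (hΓ : IsCone Γ)
    (ξ₀ : EuclideanSpace ℝ (Fin d)) (hξ₀ : ξ₀ ∈ Γ)
    (hfin : ∫⁻ x, Γ.indicator (fun ξ => ENNReal.ofReal ((‖G ξ‖ * ω ξ) ^ q)) (p x) ∂μ < ∞) :
    ∃ Γ' : Set (EuclideanSpace ℝ (Fin d)), IsOpen Γ' ∧ IsCone Γ' ∧ ξ₀ ∈ Γ' ∧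
      ∫⁻ y, Γ'.indicator (fun ξ => ENNReal.ofReal ((‖H ξ‖ * ω ξ) ^ q)) (r y) ∂ν < ∞ := by
  obtain ⟨Γ', δ, hδ, hΓ'o, hΓ', hξ₀', hsep⟩ := cone_shrink Γ hΓo hΓ ξ₀ hξ₀
  refine ⟨Γ', hΓ'o, hΓ', hξ₀', ?_⟩
  obtain ⟨B₁, hB₁, h1⟩ := hμ
  obtain ⟨B₂, hB₂, h2⟩ := hν
  have hq0 : 0 < q := by linarith
  have hb0 : 0 ≤ b := (norm_nonneg _).trans (hb 0)
  obtain ⟨A₁, A₂', hA₁0, hA₂0', hin, hout⟩ := weight_bounds hs ω hω κ hκ δ hδ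
  obtain ⟨A₂, hA₂⟩ : ∃ A₂, A₂ = b * A₂' := ⟨_, rfl⟩
  have hA₂0 : 0 ≤ A₂ := by rw [hA₂]; positivity
  have hωm := hω.1
  have hωpos := hω.2.1
  set h : X → ℝ≥0∞ := fun x => Γ.indicator (fun ξ => ENNReal.ofReal (‖G ξ‖ * ω ξ)) (p x) with hh
  have hhm : Measurable h :=
    (((hG.norm.mul hωm).ennreal_ofReal).indicator hΓo.measurableSet).comp hp
  set K : Y → X → ℝ≥0∞ := fun y x => ENNReal.ofReal (ker s (r y - p x)) with hK
  have hKm : Measurable (Function.uncurry K) :=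
    ((ker_continuous hs).measurable.comp
      ((hr.comp measurable_fst).sub (hp.comp measurable_snd))).ennreal_ofReal
  have hKy : ∀ y, Measurable (K y) := fun y =>
    ((ker_continuous hs).measurable.comp (measurable_const.sub hp)).ennreal_ofReal
  have hker : Measurable fun y => ENNReal.ofReal (ker s (r y)) :=
    ((ker_continuous hs).measurable.comp hr).ennreal_ofReal
  have hpt : ∀ y, r y ∈ Γ' → ∀ x,
      ENNReal.ofReal (‖G (p x)‖ * κ (r y - p x)) * ENNReal.ofReal (ω (r y)) ≤
        ENNReal.ofReal A₁ * (h x * K y x) +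
          (ENNReal.ofReal A₂ * ENNReal.ofReal (ker s (r y))) * K y x := by
    intro y hy x
    rw [← ENNReal.ofReal_mul (by have := hκ0 (r y - p x); positivity)]
    by_cases hx : p x ∈ Γ
    · refine le_trans ?_ le_self_add
      simp only [hh, hK, Set.indicator_of_mem hx]
      have := hωpos (p x)
      rw [← ENNReal.ofReal_mul (by positivity), ← ENNReal.ofReal_mul (by positivity)]
      apply ENNReal.ofReal_le_ofReal
      have := mul_le_mul_of_nonneg_left (hin (r y) (p x)) (norm_nonneg (G (p x)))
      calc _ = ‖G (p x)‖ * (κ (r y - p x) * ω (r y)) := by ring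
        _ ≤ _ := this
        _ = _ := by ring
    · refine le_trans ?_ le_add_self
      simp only [hK]
      have hk := ker_pos s (r y)
      rw [← ENNReal.ofReal_mul hA₂0, ← ENNReal.ofReal_mul (by positivity)]
      apply ENNReal.ofReal_le_ofReal
      have h5 := hout (r y) (p x) (hsep _ hy _ hx)
      have h6 := mul_le_mul (hb (p x)) h5
        (mul_nonneg (hκ0 _) (hωpos _).le) hb0
      calc _ = ‖G (p x)‖ * (κ (r y - p x) * ω (r y)) := by ring
        _ ≤ _ := h6
        _ = _ := by rw [hA₂]; ring
  have hbd : ∀ y, r y ∈ Γ' → ENNReal.ofReal (‖H (r y)‖ * ω (r y)) ≤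
      CH * (ENNReal.ofReal A₁ * (∫⁻ x, h x * K y x ∂μ) +
        ENNReal.ofReal A₂ * B₁ * ENNReal.ofReal (ker s (r y))) := by
    intro y hy
    rw [ENNReal.ofReal_mul (norm_nonneg _)]
    calc _ ≤ CH * (∫⁻ x, ENNReal.ofReal (‖G (p x)‖ * κ (r y - p x)) ∂μ) *
          ENNReal.ofReal (ω (r y)) := by gcongr; exact hH y
      _ = CH * ∫⁻ x, ENNReal.ofReal (‖G (p x)‖ * κ (r y - p x)) *
          ENNReal.ofReal (ω (r y)) ∂μ := by
          rw [mul_assoc, lintegral_mul_const' _ _ ENNReal.ofReal_ne_top]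
      _ ≤ CH * ∫⁻ x, (ENNReal.ofReal A₁ * (h x * K y x) +
          (ENNReal.ofReal A₂ * ENNReal.ofReal (ker s (r y))) * K y x) ∂μ := by
          gcongr with x; exact hpt y hy x
      _ = CH * (ENNReal.ofReal A₁ * (∫⁻ x, h x * K y x ∂μ) +
          (ENNReal.ofReal A₂ * ENNReal.ofReal (ker s (r y))) * ∫⁻ x, K y x ∂μ) := by
          have hm1 : Measurable fun x => h x * K y x := hhm.mul (hKy y)
          have hm2 : Measurable fun x => ENNReal.ofReal A₁ * (h x * K y x) := hm1.const_mul _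
          rw [lintegral_add_left hm2, lintegral_const_mul _ hm1, lintegral_const_mul _ (hKy y)]
      _ ≤ CH * (ENNReal.ofReal A₁ * (∫⁻ x, h x * K y x ∂μ) +
          (ENNReal.ofReal A₂ * ENNReal.ofReal (ker s (r y))) * B₁) := by
          gcongr; exact h1 (r y)
      _ = _ := by congr 2; ring
  have hbq : ∀ y, Γ'.indicator (fun ξ => ENNReal.ofReal ((‖H ξ‖ * ω ξ) ^ q)) (r y) ≤
      CH ^ q * (2 ^ (q - 1) * (ENNReal.ofReal A₁ ^ q * (∫⁻ x, h x * K y x ∂μ) ^ q +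
        (ENNReal.ofReal A₂ * B₁) ^ q * ENNReal.ofReal (ker s (r y)))) := by
    intro y
    by_cases hy : r y ∈ Γ'
    · rw [Set.indicator_of_mem hy, ← ENNReal.ofReal_rpow_of_nonneg
        (mul_nonneg (norm_nonneg _) (hωpos _).le) hq0.le]
      refine (ENNReal.rpow_le_rpow (hbd y hy) hq0.le).trans ?_
      rw [ENNReal.mul_rpow_of_nonneg _ _ hq0.le]
      gcongr
      refine (ENNReal.rpow_add_le_mul_rpow_add_rpow _ _ hq).trans ?_
      rw [ENNReal.mul_rpow_of_nonneg _ _ hq0.le, ENNReal.mul_rpow_of_nonneg _ _ hq0.le]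
      gcongr
      have hk1 : ENNReal.ofReal (ker s (r y)) ≤ 1 := by
        rw [ENNReal.ofReal_le_one, ker, Real.exp_le_one_iff]
        have : 0 ≤ ‖r y‖ ^ (1 / s) := by positivity
        linarith
      simpa using ENNReal.rpow_le_rpow_of_exponent_ge hk1 hq
    · rw [Set.indicator_of_notMem hy]; exact zero_le
  have hTm : Measurable fun y => (∫⁻ x, h x * K y x ∂μ) ^ q :=
    (Measurable.lintegral_prod_right' (f := Function.uncurry fun y x => h x * K y x)
      ((hhm.comp measurable_snd).mul hKm)).pow_const q
  have hschur := schur μ ν q hq h hhm K hKm B₁ B₂ (fun y => h1 (r y)) (fun x => by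
    simp only [hK]
    simp_rw [ker_sub_comm s (r _) (p x)]
    exact h2 (p x))
  have hhq : ∫⁻ x, h x ^ q ∂μ < ∞ := by
    refine lt_of_le_of_lt (lintegral_mono fun x => ?_) hfin
    simp only [hh]
    by_cases hx : p x ∈ Γ
    · rw [Set.indicator_of_mem hx, Set.indicator_of_mem hx, ENNReal.ofReal_rpow_of_nonneg
        (mul_nonneg (norm_nonneg _) (hωpos _).le) hq0.le]
    · rw [Set.indicator_of_notMem hx, ENNReal.zero_rpow_of_pos hq0]; exact zero_le
  have hk2 : ∫⁻ y, ENNReal.ofReal (ker s (r y)) ∂ν ≤ B₂ := by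
    have := h2 0
    simpa [ker_neg] using this
  refine lt_of_le_of_lt (lintegral_mono hbq) ?_
  rw [lintegral_const_mul' _ _ (ENNReal.rpow_ne_top_of_nonneg hq0.le hCH),
    lintegral_const_mul' _ _ (ENNReal.rpow_ne_top_of_nonneg (by linarith) (by simp)),
    lintegral_add_left (hTm.const_mul _), lintegral_const_mul _ hTm,
    lintegral_const_mul _ hker]
  refine ENNReal.mul_lt_top (ENNReal.rpow_lt_top_of_nonneg hq0.le hCH)
    (ENNReal.mul_lt_top (ENNReal.rpow_lt_top_of_nonneg (by linarith) (by simp))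
    (ENNReal.add_lt_top.mpr ⟨ENNReal.mul_lt_top
      (ENNReal.rpow_lt_top_of_nonneg hq0.le ENNReal.ofReal_ne_top) ?_, ENNReal.mul_lt_top
      (ENNReal.rpow_lt_top_of_nonneg hq0.le (ENNReal.mul_ne_top ENNReal.ofReal_ne_top hB₁))
      (lt_of_le_of_lt hk2 hB₂.lt_top)⟩))
  exact lt_of_le_of_lt hschur (ENNReal.mul_lt_top
    (ENNReal.rpow_lt_top_of_nonneg (by linarith) hB₁) (ENNReal.mul_lt_top hB₂.lt_top hhq))

open scoped FourierTransform

/-- Normalizing constant. -/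
def cd (d : ℕ) : ℝ := (2 * Real.pi) ^ (-(d : ℝ) / 2)

lemma cd_pos (d : ℕ) : 0 < cd d := by unfold cd; positivity

lemma FT_def (g : EuclideanSpace ℝ (Fin d) → ℂ) (ξ : EuclideanSpace ℝ (Fin d)) :
    FT g ξ = (cd d : ℂ) * ∫ x, g x * Complex.exp (-(⟪x, ξ⟫ : ℝ) * Complex.I) := rfl

lemma norm_exp_I (t : ℝ) : ‖Complex.exp (-(t : ℝ) * Complex.I)‖ = 1 := by
  rw [← Complex.ofReal_neg, Complex.norm_exp_ofReal_mul_I]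

lemma FT_norm_le (g : EuclideanSpace ℝ (Fin d) → ℂ) (ξ : EuclideanSpace ℝ (Fin d)) :
    ‖FT g ξ‖ ≤ cd d * ∫ x, ‖g x‖ := by
  rw [FT_def, norm_mul, Complex.norm_real, Real.norm_of_nonneg (cd_pos d).le]
  gcongr
  · exact (cd_pos d).le
  refine (norm_integral_le_integral_norm _).trans (le_of_eq ?_)
  congr 1; funext x
  rw [norm_mul, norm_exp_I, mul_one]

lemma FT_eq_fourier (g : EuclideanSpace ℝ (Fin d) → ℂ) (ξ : EuclideanSpace ℝ (Fin d)) :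
    FT g ξ = (cd d : ℂ) * 𝓕 g ((2 * Real.pi)⁻¹ • ξ) := by
  rw [FT_def, Real.fourier_eq']
  congr 2
  funext x
  rw [smul_eq_mul, mul_comm, inner_smul_right]
  congr 2
  have : (Real.pi : ℂ) ≠ 0 := by exact_mod_cast Real.pi_ne_zero
  push_cast
  field_simp

lemma FT_continuous {g : EuclideanSpace ℝ (Fin d) → ℂ} (hg : Integrable g) :
    Continuous (FT g) := by
  have h : Continuous (𝓕 g) := VectorFourier.fourierIntegral_continuous
    Real.continuous_fourierChar (by exact continuous_inner) hg
  have : FT g = fun ξ => (cd d : ℂ) * 𝓕 g ((2 * Real.pi)⁻¹ • ξ) := by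
    funext ξ; exact FT_eq_fourier g ξ
  rw [this]
  exact continuous_const.mul (h.comp (continuous_const_smul _))

lemma FT_inversion {φ : EuclideanSpace ℝ (Fin d) → ℂ} (hc : Continuous φ) (hi : Integrable φ)
    (hF : Integrable (FT φ)) : ∃ C : ℂ, ∀ x,
      φ x = C * ∫ η, FT φ η * Complex.exp ((⟪x, η⟫ : ℝ) * Complex.I) := by
  have hcd : (cd d : ℂ) ≠ 0 := by exact_mod_cast (cd_pos d).ne'
  have hpi : (2 * Real.pi) ≠ 0 := by positivity
  have e1 : 𝓕 φ = fun w => (cd d : ℂ)⁻¹ * FT φ ((2 * Real.pi) • w) := by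
    funext w
    rw [FT_eq_fourier, smul_smul, inv_mul_cancel₀ hpi, one_smul, inv_mul_cancel_left₀ hcd]
  have hF' : Integrable (𝓕 φ) := by
    rw [e1]
    exact ((integrable_comp_smul_iff volume (FT φ) hpi).mpr hF).const_mul _
  have hinv := hc.fourierInv_fourier_eq hi hF'
  refine ⟨(cd d : ℂ)⁻¹ * (|((2 * Real.pi) ^ Module.finrank ℝ (EuclideanSpace ℝ (Fin d)))⁻¹| : ℝ),
    fun x => ?_⟩
  conv_lhs => rw [← hinv]
  rw [Real.fourierInv_eq']
  have := Measure.integral_comp_smul (volume : Measure (EuclideanSpace ℝ (Fin d)))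
    (fun η => FT φ η * Complex.exp ((⟪x, η⟫ : ℝ) * Complex.I)) (2 * Real.pi)
  rw [mul_assoc, ← Complex.real_smul, ← this, ← integral_const_mul]
  congr 1
  funext w
  rw [e1]
  simp only [smul_eq_mul]
  rw [mul_comm, mul_assoc, inner_smul_right, real_inner_comm]

lemma cutoff_integrable {s : ℝ} {φ : EuclideanSpace ℝ (Fin d) → ℂ} (h : IsSCutoff s φ) :
    Integrable φ := h.1.continuous.integrable_of_hasCompactSupport h.2.1

lemma cutoff_FT_integrable {s : ℝ} (hs : 1 < s) {φ : EuclideanSpace ℝ (Fin d) → ℂ}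
    (h : IsSCutoff s φ) : Integrable (FT φ) := by
  obtain ⟨C, hC, hb⟩ := h.2.2 1 one_pos
  have hk : Integrable (ker s : EuclideanSpace ℝ (Fin d) → ℝ) := by
    refine ⟨(ker_continuous hs).aestronglyMeasurable, ?_⟩
    rw [hasFiniteIntegral_iff_ofReal (Filter.Eventually.of_forall fun x => (ker_pos s x).le)]
    exact ker_lintegral hs
  refine (hk.const_mul C).mono' (FT_continuous (cutoff_integrable h)).aestronglyMeasurable
    (Filter.Eventually.of_forall fun x => ?_)
  simpa [ker] using hb x

lemma cutoff_mul_integrable {s : ℝ} {φ g : EuclideanSpace ℝ (Fin d) → ℂ} (h : IsSCutoff s φ)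
    (hg : Integrable g) : Integrable (fun x => φ x * g x) := by
  obtain ⟨b, hb⟩ := h.2.1.exists_bound_of_continuous h.1.continuous
  exact hg.bdd_mul h.1.continuous.aestronglyMeasurable (Filter.Eventually.of_forall hb)

/-- The convolution bound. -/
lemma conv_bound {s : ℝ} (hs : 1 < s) {φ g : EuclideanSpace ℝ (Fin d) → ℂ} (h : IsSCutoff s φ)
    (hg : Integrable g) : ∃ CH : ℝ≥0∞, CH ≠ ∞ ∧ ∀ ξ,
      ENNReal.ofReal ‖FT (fun x => φ x * g x) ξ‖ ≤
        CH * ∫⁻ η, ENNReal.ofReal (‖FT g η‖ * ‖FT φ (ξ - η)‖) := by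
  have hFi := cutoff_FT_integrable hs h
  obtain ⟨C, hC⟩ := FT_inversion h.1.continuous (cutoff_integrable h) hFi
  have hcd : (cd d : ℂ) ≠ 0 := by exact_mod_cast (cd_pos d).ne'
  refine ⟨ENNReal.ofReal ‖C‖, ENNReal.ofReal_ne_top, fun ξ => ?_⟩
  have key : FT (fun x => φ x * g x) ξ = C * ∫ η, FT g η * FT φ (ξ - η) := by
    have h1 : ∀ x, φ x * g x * Complex.exp (-(⟪x, ξ⟫ : ℝ) * Complex.I) =
        C * ∫ η, FT φ η * (g x * Complex.exp (-(⟪x, ξ - η⟫ : ℝ) * Complex.I)) := by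
      intro x
      conv_lhs => rw [hC x]
      rw [mul_assoc, mul_assoc, ← integral_mul_const]
      congr 2
      funext η
      have : Complex.exp (-(⟪x, ξ - η⟫ : ℝ) * Complex.I) =
          Complex.exp ((⟪x, η⟫ : ℝ) * Complex.I) * Complex.exp (-(⟪x, ξ⟫ : ℝ) * Complex.I) := by
        rw [← Complex.exp_add, inner_sub_right]
        congr 1
        push_cast
        ring
      rw [this]; ring
    rw [FT_def]
    simp_rw [h1]
    rw [integral_const_mul, integral_integral_swap]
    · rw [← integral_sub_left_eq_self (fun η => FT g η * FT φ (ξ - η)) volume ξ]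
      rw [← integral_const_mul, ← integral_const_mul, ← integral_const_mul]
      congr 1
      funext η
      rw [integral_const_mul, FT_def g, sub_sub_cancel]
      ring
    · have hm : Integrable (fun z : EuclideanSpace ℝ (Fin d) × EuclideanSpace ℝ (Fin d) =>
          g z.1 * FT φ z.2) (volume.prod volume) := hg.mul_prod hFi
      have hcont : Continuous (fun z : EuclideanSpace ℝ (Fin d) × EuclideanSpace ℝ (Fin d) =>
          Complex.exp (-(⟪z.1, ξ - z.2⟫ : ℝ) * Complex.I)) := by fun_prop
      have := hm.bdd_mul (c := 1) hcont.aestronglyMeasurable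
        (Filter.Eventually.of_forall fun z => (norm_exp_I _).le)
      refine this.congr (Filter.Eventually.of_forall fun z => ?_)
      simp only [Function.uncurry]
      ring
  rw [key, norm_mul, ENNReal.ofReal_mul (norm_nonneg _)]
  gcongr
  rw [ofReal_norm]
  refine (enorm_integral_le_lintegral_enorm _).trans (le_of_eq ?_)
  congr 1; funext η
  rw [← ofReal_norm, norm_mul]

lemma cutoff_sq {s : ℝ} (hs : 1 < s) {φ : EuclideanSpace ℝ (Fin d) → ℂ} (h : IsSCutoff s φ) :
    IsSCutoff s (fun x => φ x * φ x) := by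
  refine ⟨h.1.mul h.1, h.2.1.mul_right, fun N hN => ?_⟩
  obtain ⟨CH, hCH, hb⟩ := conv_bound hs h (cutoff_integrable h)
  obtain ⟨C1, hC1, h1⟩ := h.2.2 N hN
  obtain ⟨C2, hC2, h2⟩ := h.2.2 (N + 1) (by positivity)
  obtain ⟨B, hB, hker⟩ := ker_unif_volume (d := d) hs
  have hpt : ∀ ξ η : EuclideanSpace ℝ (Fin d), ‖FT φ η‖ * ‖FT φ (ξ - η)‖ ≤
      (C1 * C2 * Real.exp (-N * ‖ξ‖ ^ (1 / s))) * ker s (ξ - η) := by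
    intro ξ η
    have h3 := rpow_sub hs (norm_nonneg ξ) (norm_nonneg η) (norm_nonneg (ξ - η)) (by
      have := norm_add_le η (ξ - η)
      simpa using this)
    calc _ ≤ (C1 * Real.exp (-N * ‖η‖ ^ (1 / s))) *
          (C2 * Real.exp (-(N + 1) * ‖ξ - η‖ ^ (1 / s))) := by
            gcongr
            · exact h1 η
            · exact h2 _
      _ = C1 * C2 * Real.exp (-N * (‖η‖ ^ (1 / s) + ‖ξ - η‖ ^ (1 / s)) + -‖ξ - η‖ ^ (1 / s)) := by
          rw [mul_mul_mul_comm, ← Real.exp_add]; congr 2; ring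
      _ ≤ C1 * C2 * Real.exp (-N * ‖ξ‖ ^ (1 / s) + -‖ξ - η‖ ^ (1 / s)) := by
          gcongr C1 * C2 * Real.exp (?_ + _)
          nlinarith
      _ = _ := by rw [Real.exp_add, ker]; ring
  refine ⟨CH.toReal * (C1 * C2) * B.toReal + 1, by positivity, fun ξ => ?_⟩
  have h4 : ENNReal.ofReal ‖FT (fun x => φ x * φ x) ξ‖ ≤
      CH * (ENNReal.ofReal (C1 * C2 * Real.exp (-N * ‖ξ‖ ^ (1 / s))) * B) := by
    refine (hb ξ).trans ?_
    gcongr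
    calc _ ≤ ∫⁻ η, ENNReal.ofReal (C1 * C2 * Real.exp (-N * ‖ξ‖ ^ (1 / s))) *
          ENNReal.ofReal (ker s (ξ - η)) := by
            refine lintegral_mono fun η => ?_
            rw [← ENNReal.ofReal_mul (by positivity)]
            exact ENNReal.ofReal_le_ofReal (hpt ξ η)
      _ ≤ _ := by
        rw [lintegral_const_mul' _ _ ENNReal.ofReal_ne_top]
        gcongr
        exact hker ξ
  have h5 := ENNReal.toReal_mono (ENNReal.mul_ne_top hCH
    (ENNReal.mul_ne_top ENNReal.ofReal_ne_top hB)) h4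
  rw [ENNReal.toReal_ofReal (norm_nonneg _), ENNReal.toReal_mul, ENNReal.toReal_mul,
    ENNReal.toReal_ofReal (by positivity)] at h5
  have := Real.exp_pos (-N * ‖ξ‖ ^ (1 / s))
  nlinarith

/-- The periodization of a function supported in the open unit box. -/
lemma torus_continuous (w : (Fin d → ℝ) → ℂ) (hw : Continuous w) (δ : ℝ) (hδ : 0 < δ)
    (hsupp : ∀ t, w t ≠ 0 → ∀ i, δ ≤ t i ∧ t i ≤ 1 - δ) :
    Continuous fun θ : UnitAddTorus (Fin d) =>
      w (fun i => (AddCircle.equivIoc (1 : ℝ) 0 (θ i)).1) := by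
  rw [continuous_iff_continuousAt]
  intro θ
  by_cases hθ : ∀ i, θ i ≠ ((0 : ℝ) : AddCircle (1 : ℝ))
  · have h1 : ContinuousAt (fun θ : UnitAddTorus (Fin d) =>
        (fun i => (AddCircle.equivIoc (1 : ℝ) 0 (θ i)).1)) θ := by
      rw [continuousAt_pi]
      intro i
      have h2 := AddCircle.continuousAt_equivIoc (1 : ℝ) 0 (hθ i)
      exact (continuous_subtype_val.continuousAt.comp h2).comp
        (f := fun θ : UnitAddTorus (Fin d) => θ i) (continuous_apply i).continuousAt
    exact ContinuousAt.comp (f := fun θ : UnitAddTorus (Fin d) =>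
        (fun i => (AddCircle.equivIoc (1 : ℝ) 0 (θ i)).1)) hw.continuousAt h1
  · push Not at hθ
    obtain ⟨i, hi⟩ := hθ
    have hnhds : {θ' : UnitAddTorus (Fin d) | ‖θ' i‖ < δ} ∈ nhds θ := by
      have : IsOpen {θ' : UnitAddTorus (Fin d) | ‖θ' i‖ < δ} :=
        isOpen_lt (continuous_norm.comp (continuous_apply i)) continuous_const
      apply this.mem_nhds
      show ‖θ i‖ < δ
      rw [hi]
      simpa using hδ
    have hz : (fun θ : UnitAddTorus (Fin d) =>
        w (fun i => (AddCircle.equivIoc (1 : ℝ) 0 (θ i)).1)) =ᶠ[nhds θ] fun _ => 0 := by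
      filter_upwards [hnhds] with θ' hθ'
      by_contra hne
      have h3 := hsupp _ hne i
      set u := (AddCircle.equivIoc (1 : ℝ) 0 (θ' i)).1 with hu
      have h4 : (u : AddCircle (1 : ℝ)) = θ' i := AddCircle.coe_equivIoc (p := (1 : ℝ)) (a := 0)
      have h5 : ‖(u : AddCircle (1 : ℝ))‖ < δ := by rw [h4]; exact hθ'
      rw [UnitAddCircle.norm_eq] at h5
      have h6 := abs_lt.mp h5
      have h7 : (0 : ℝ) < round u := by linarith [h3.1]
      have h8 : (round u : ℝ) < 1 := by linarith [h3.2]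
      have h9 : 0 < round u := by exact_mod_cast h7
      have h10 : round u < 1 := by exact_mod_cast h8
      omega
    exact continuousAt_const.congr hz.symm

lemma mFourier_coe (k : Fin d → ℤ) (t : Fin d → ℝ) :
    UnitAddTorus.mFourier k (fun i => (t i : UnitAddCircle)) =
      Complex.exp ((2 * Real.pi * ∑ i, t i * k i : ℝ) * Complex.I) := by
  simp only [UnitAddTorus.mFourier, ContinuousMap.coe_mk, fourier_coe_apply]
  rw [← Complex.exp_sum]
  congr 1
  push_cast
  rw [Finset.mul_sum, Finset.sum_mul]
  apply Finset.sum_congr rfl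
  intro i _
  simp
  ring

lemma torus_hasSum (w : (Fin d → ℝ) → ℂ) (hw : Continuous w) (δ : ℝ) (hδ : 0 < δ)
    (hsupp : ∀ t, w t ≠ 0 → ∀ i, δ ≤ t i ∧ t i ≤ 1 - δ)
    (c : (Fin d → ℤ) → ℂ)
    (hc : ∀ k, c k = ∫ t, w t * Complex.exp (-(2 * Real.pi * ∑ i, t i * k i : ℝ) * Complex.I))
    (hsum : Summable c) (t : Fin d → ℝ) (ht : ∀ i, δ ≤ t i ∧ t i ≤ 1 - δ) :
    HasSum (fun k => c k * Complex.exp ((2 * Real.pi * ∑ i, t i * k i : ℝ) * Complex.I)) (w t) := by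
  set W : C(UnitAddTorus (Fin d), ℂ) := ⟨_, torus_continuous w hw δ hδ hsupp⟩ with hW
  have hWt : ∀ t : Fin d → ℝ, (∀ i, t i ∈ Set.Ioc (0 : ℝ) (0 + 1)) →
      W (fun i => (t i : UnitAddCircle)) = w t := by
    intro t ht
    simp only [hW, ContinuousMap.coe_mk]
    congr 1
    funext i
    have := AddCircle.equivIoc_coe_eq (p := (1 : ℝ)) (a := 0) (ht i)
    rw [this]
  have hcoef : UnitAddTorus.mFourierCoeff W = c := by
    funext k
    rw [UnitAddTorus.mFourierCoeff_eq_integral _ _ (fun _ => 0), hc]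
    rw [← setIntegral_eq_integral_of_forall_compl_eq_zero
      (s := {x : Fin d → ℝ | ∀ i, x i ∈ Set.Ioc (0 : ℝ) (0 + 1)})
      (f := fun t => w t * Complex.exp (-(2 * Real.pi * ∑ i, t i * k i : ℝ) * Complex.I))]
    · apply setIntegral_congr_fun
      · have : {x : Fin d → ℝ | ∀ i, x i ∈ Set.Ioc (0 : ℝ) (0 + 1)} =
          Set.univ.pi fun _ => Set.Ioc (0 : ℝ) (0 + 1) := by ext; simp
        rw [this]
        exact MeasurableSet.univ_pi fun i => measurableSet_Ioc
      · intro x hx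
        simp only [smul_eq_mul]
        rw [hWt x hx, mFourier_coe, mul_comm]
        congr 3
        simp
    · intro x hx
      have : w x = 0 := by
        by_contra hne
        apply hx
        intro i
        have := hsupp x hne i
        constructor <;> linarith [this.1, this.2]
      rw [this, zero_mul]
  have := UnitAddTorus.hasSum_mFourier_series_apply_of_summable (f := W) (hcoef ▸ hsum)
    (fun i => (t i : UnitAddCircle))
  rw [hcoef, hWt t (fun i => by constructor <;> linarith [(ht i).1, (ht i).2])] at this
  simpa only [smul_eq_mul, mFourier_coe] using this

lemma integral_comp_affine (L : (Fin d → ℝ) ≃L[ℝ] EuclideanSpace ℝ (Fin d)) :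
    ∃ a : ℝ, ∀ (x₁ : EuclideanSpace ℝ (Fin d)) (F : EuclideanSpace ℝ (Fin d) → ℂ),
      ∫ t, F (x₁ + L t) = a * ∫ x, F x := by
  obtain ⟨a, -, -, hL⟩ := map_volume L
  refine ⟨a.toReal, fun x₁ F => ?_⟩
  have h1 : ∫ t, F (x₁ + L t) = ∫ y, F (x₁ + y) ∂(Measure.map L volume) :=
    (L.toHomeomorph.measurableEmbedding.integral_map (fun y => F (x₁ + y))).symm
  rw [h1, hL, integral_smul_measure, integral_add_left_eq_self F x₁, Complex.real_smul]

/-- Lattice (Poisson) version of the convolution bound. -/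
lemma lattice_bound {s : ℝ} (hs : 1 < s) (L M : (Fin d → ℝ) ≃L[ℝ] EuclideanSpace ℝ (Fin d))
    (hLM : ∀ t u, ⟪L t, M u⟫ = 2 * Real.pi * ∑ i, t i * u i)
    (x₁ : EuclideanSpace ℝ (Fin d)) (δ : ℝ) (hδ : 0 < δ)
    {φ g : EuclideanSpace ℝ (Fin d) → ℂ} (h : IsSCutoff s φ)
    (hsupp : ∀ x, φ x ≠ 0 → ∃ t : Fin d → ℝ, (∀ i, δ ≤ t i ∧ t i ≤ 1 - δ) ∧ x = x₁ + L t)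
    (hg : Integrable g) (hg0 : ∀ x, φ x = 0 → g x = 0) : ∃ CH : ℝ≥0∞, CH ≠ ∞ ∧ ∀ ξ,
      ENNReal.ofReal ‖FT (fun x => φ x * g x) ξ‖ ≤
        CH * ∫⁻ k : Fin d → ℤ, ENNReal.ofReal (‖FT g (M (fun i => (k i : ℝ)))‖ *
          ‖FT φ (ξ - M (fun i => (k i : ℝ)))‖) ∂Measure.count := by
  obtain ⟨a, ha⟩ := integral_comp_affine L
  have hcd : (cd d : ℂ) ≠ 0 := by exact_mod_cast (cd_pos d).ne'
  obtain ⟨C, hC⟩ : ∃ C : ℂ, C = a * (cd d : ℂ)⁻¹ := ⟨_, rfl⟩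
  refine ⟨ENNReal.ofReal ‖C‖, ENNReal.ofReal_ne_top, fun ξ => ?_⟩
  set lam : (Fin d → ℤ) → EuclideanSpace ℝ (Fin d) := fun k => M (fun i => (k i : ℝ)) with hlam
  -- summability
  have hsumF : Summable fun k => ‖FT φ (ξ + lam k)‖ := by
    obtain ⟨B, hB, hker⟩ := ker_unif_lattice hs M
    obtain ⟨C1, hC1, h1⟩ := h.2.2 1 one_pos
    have hk : Summable fun k => ker s (-ξ - lam k) := by
      have h2 := (hker (-ξ)).trans_lt hB.lt_top
      rw [lintegral_count] at h2
      have h3 := ENNReal.summable_toReal h2.ne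
      refine h3.congr fun k => ?_
      rw [ENNReal.toReal_ofReal (ker_pos _ _).le]
    refine Summable.of_nonneg_of_le (fun _ => norm_nonneg _) (fun k => ?_) (hk.mul_left C1)
    have h4 : -ξ - lam k = -(ξ + lam k) := by abel
    rw [h4, ker_neg]
    simpa [ker] using h1 (ξ + lam k)
  -- the Fourier series of `φ e^{-i⟨x,ξ⟩}`
  have hseries : ∀ x, φ x ≠ 0 → HasSum (fun k => C * FT φ (ξ + lam k) *
      Complex.exp ((⟪x, lam k⟫ : ℝ) * Complex.I))
      (φ x * Complex.exp (-(⟪x, ξ⟫ : ℝ) * Complex.I)) := by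
    intro x hx
    obtain ⟨t, ht, rfl⟩ := hsupp x hx
    have hcoef : ∀ k : Fin d → ℤ, Complex.exp ((⟪x₁, lam k⟫ : ℝ) * Complex.I) *
          (C * FT φ (ξ + lam k)) =
        ∫ t, (φ (x₁ + L t) * Complex.exp (-(⟪x₁ + L t, ξ⟫ : ℝ) * Complex.I)) *
          Complex.exp (-(2 * Real.pi * ∑ i, t i * k i : ℝ) * Complex.I) := by
      intro k
      have e := ha x₁ (fun x => φ x * Complex.exp (-(⟪x, ξ⟫ : ℝ) * Complex.I) *
        Complex.exp (-(⟪x - x₁, lam k⟫ : ℝ) * Complex.I))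
      simp only [add_sub_cancel_left, hlam, hLM] at e
      rw [e, FT_def, hC]
      have e2 : ∀ x : EuclideanSpace ℝ (Fin d),
          φ x * Complex.exp (-(⟪x, ξ⟫ : ℝ) * Complex.I) *
            Complex.exp (-(⟪x - x₁, M fun i => (k i : ℝ)⟫ : ℝ) * Complex.I) =
          Complex.exp ((⟪x₁, lam k⟫ : ℝ) * Complex.I) *
            (φ x * Complex.exp (-(⟪x, ξ + lam k⟫ : ℝ) * Complex.I)) := by
        intro x
        rw [mul_assoc, ← Complex.exp_add, mul_left_comm, ← Complex.exp_add, inner_sub_left,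
          inner_add_right]
        congr 2
        push_cast
        ring
      simp_rw [e2]
      rw [integral_const_mul]
      field_simp
    have hwc : Continuous fun t => φ (x₁ + L t) *
        Complex.exp (-(⟪x₁ + L t, ξ⟫ : ℝ) * Complex.I) := by
      have hφc := h.1.continuous
      have hLc := L.continuous
      fun_prop
    have hws : ∀ t, φ (x₁ + L t) * Complex.exp (-(⟪x₁ + L t, ξ⟫ : ℝ) * Complex.I) ≠ 0 →
        ∀ i, δ ≤ t i ∧ t i ≤ 1 - δ := by
      intro t' ht'
      obtain ⟨u, hu, hu'⟩ := hsupp _ (left_ne_zero_of_mul ht')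
      have : t' = u := L.injective (add_left_cancel hu')
      rw [this]; exact hu
    have hsum : Summable fun k => Complex.exp ((⟪x₁, lam k⟫ : ℝ) * Complex.I) *
          (C * FT φ (ξ + lam k)) := by
      refine Summable.of_norm ((hsumF.mul_left ‖C‖).congr fun k => ?_)
      rw [norm_mul, Complex.norm_exp_ofReal_mul_I, one_mul, norm_mul]
    have := torus_hasSum _ hwc δ hδ hws _ hcoef hsum t ht
    refine this.congr_fun ?_ |> fun hh => hh
    intro k
    rw [inner_add_left, hlam, hLM]
    push_cast
    rw [add_mul, Complex.exp_add]
    ring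
  have hF : ∀ k, Integrable (fun x => C * FT φ (ξ + lam k) *
      (g x * Complex.exp (-(⟪x, -lam k⟫ : ℝ) * Complex.I))) := by
    intro k
    refine Integrable.const_mul ?_ _
    have hcont : Continuous (fun x : EuclideanSpace ℝ (Fin d) =>
          Complex.exp (-(⟪x, -lam k⟫ : ℝ) * Complex.I)) := by fun_prop
    exact (hg.bdd_mul (c := 1) hcont.aestronglyMeasurable
        (Filter.Eventually.of_forall fun z => (norm_exp_I _).le)).congr
        (Filter.Eventually.of_forall fun x => mul_comm _ _)
  have hnorm : ∀ k, ∫ x, ‖C * FT φ (ξ + lam k) *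
      (g x * Complex.exp (-(⟪x, -lam k⟫ : ℝ) * Complex.I))‖ =
        ‖C‖ * ‖FT φ (ξ + lam k)‖ * ∫ x, ‖g x‖ := by
    intro k
    rw [← integral_const_mul]
    congr 1; funext x
    rw [norm_mul, norm_mul, norm_mul, norm_exp_I, mul_one]
  have hswap := hasSum_integral_of_summable_integral_norm hF (by
    simp_rw [hnorm]
    exact (hsumF.mul_left _).mul_right _)
  have hpt : ∀ x, (∑' k, C * FT φ (ξ + lam k) *
      (g x * Complex.exp (-(⟪x, -lam k⟫ : ℝ) * Complex.I))) =
      φ x * g x * Complex.exp (-(⟪x, ξ⟫ : ℝ) * Complex.I) := by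
    intro x
    by_cases hx : φ x = 0
    · simp [hx, hg0 x hx]
    · have := ((hseries x hx).mul_left (g x)).tsum_eq
      rw [mul_comm (φ x) (g x), mul_assoc, ← this]
      congr 1; funext k
      rw [inner_neg_right]
      push_cast
      rw [neg_neg]
      ring
  simp_rw [hpt, integral_const_mul] at hswap
  have hFT := (hswap.mul_left (cd d : ℂ)).tsum_eq
  rw [← FT_def (fun x => φ x * g x)] at hFT
  have hterm : ∀ k, (cd d : ℂ) * (C * FT φ (ξ + lam k) *
      ∫ x, g x * Complex.exp (-(⟪x, -lam k⟫ : ℝ) * Complex.I)) =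
      C * (FT g (-lam k) * FT φ (ξ + lam k)) := by
    intro k
    rw [FT_def g]; ring
  simp_rw [hterm] at hFT
  rw [← hFT, ofReal_norm, lintegral_count, ← ENNReal.tsum_mul_left]
  refine (enorm_tsum_le_tsum_enorm).trans (le_of_eq ?_)
  rw [← (Equiv.neg (Fin d → ℤ)).tsum_eq]
  congr 1; funext k
  have hl : lam ((Equiv.neg (Fin d → ℤ)) k) = -lam k := by
    simp only [hlam]
    rw [← map_neg]; congr 1; funext i; simp
  rw [hl, neg_neg, ← sub_eq_add_neg, ← ENNReal.ofReal_mul (norm_nonneg _), ← ofReal_norm,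
    norm_mul, norm_mul]

lemma exists_clm (B : Matrix (Fin d) (Fin d) ℝ) (hB : IsUnit B.det) :
    ∃ M : (Fin d → ℝ) ≃L[ℝ] EuclideanSpace ℝ (Fin d), ∀ t, M t = toE (B.mulVec t) := by
  have hB' : IsUnit B := (Matrix.isUnit_iff_isUnit_det B).mpr hB
  refine ⟨(LinearEquiv.ofBijective (Matrix.toLin' B) ⟨?_, ?_⟩).toContinuousLinearEquiv.trans
    (EuclideanSpace.equiv (Fin d) ℝ).symm, fun t => ?_⟩
  · exact Matrix.mulVec_injective_iff_isUnit.mpr hB'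
  · exact Matrix.mulVec_surjective_iff_isUnit.mpr hB'
  · rfl

lemma inner_toE (a b : Fin d → ℝ) : (⟪toE a, toE b⟫ : ℝ) = dotProduct a b := by
  simp [toE, PiLp.inner_apply, dotProduct, mul_comm]

lemma toE_apply (a : Fin d → ℝ) (i : Fin d) : toE a i = a i := rfl

/-- The dual lattice basis and the rescaled primal basis. -/
lemma exists_LM (A : Matrix (Fin d) (Fin d) ℝ) (hA : IsUnit A.det) (c : ℝ) (hc : 0 < c) :
    ∃ L M : (Fin d → ℝ) ≃L[ℝ] EuclideanSpace ℝ (Fin d),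
      (∀ t, L t = (2 * Real.pi / c) • toE (A.mulVec t)) ∧
      (∀ k : Fin d → ℤ, dualLatPt A c k = M (fun i => (k i : ℝ))) ∧
      ∀ t u, (⟪L t, M u⟫ : ℝ) = 2 * Real.pi * ∑ i, t i * u i := by
  have hAT : IsUnit A.transpose.det := by rwa [Matrix.det_transpose]
  have hsm : ∀ (r : ℝ) (v : Fin d → ℝ), toE (r • v) = r • toE v := fun r v => map_smul _ r v
  obtain ⟨L, hL⟩ := exists_clm ((2 * Real.pi / c) • A) (by
    rw [Matrix.det_smul]
    refine IsUnit.mul (isUnit_iff_ne_zero.mpr ?_) hA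
    have := Real.pi_pos
    positivity)
  obtain ⟨M, hM⟩ := exists_clm (c • A.transpose⁻¹) (by
    rw [Matrix.det_smul]
    refine IsUnit.mul (isUnit_iff_ne_zero.mpr (by positivity)) ?_
    exact Matrix.isUnit_nonsing_inv_det _ hAT)
  refine ⟨L, M, fun t => ?_, fun k => ?_, fun t u => ?_⟩
  · rw [hL, Matrix.smul_mulVec, hsm]
  · rw [hM, Matrix.smul_mulVec]; rfl
  · rw [hL, hM, Matrix.smul_mulVec, Matrix.smul_mulVec, inner_toE, smul_dotProduct,
      dotProduct_smul, dotProduct_comm, Matrix.dotProduct_mulVec, ← Matrix.mulVec_transpose,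
      Matrix.mulVec_mulVec, Matrix.mul_nonsing_inv _ hAT, Matrix.one_mulVec, dotProduct_comm,
      smul_eq_mul, smul_eq_mul, dotProduct]
    field_simp

lemma FLSemi_iff (ω : EuclideanSpace ℝ (Fin d) → ℝ) (hω : ∀ x, 0 < ω x) (q : ℝ) (hq : 1 ≤ q)
    (F : EuclideanSpace ℝ (Fin d) → ℂ) (Γ : Set (EuclideanSpace ℝ (Fin d))) (hΓ : IsOpen Γ) :
    FLSemi ω (ENNReal.ofReal q) F Γ ≠ ∞ ↔
      ∫⁻ x, Γ.indicator (fun ξ => ENNReal.ofReal ((‖FT F ξ‖ * ω ξ) ^ q)) x < ∞ := by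
  rw [lintegral_indicator hΓ.measurableSet, FLSemi, ← lt_top_iff_ne_top,
    eLpNorm_lt_top_iff_lintegral_rpow_enorm_lt_top (by simp; linarith) ENNReal.ofReal_ne_top,
    ENNReal.toReal_ofReal (by linarith)]
  have : ∀ ξ, ‖‖FT F ξ‖ * ω ξ‖ₑ ^ q = ENNReal.ofReal ((‖FT F ξ‖ * ω ξ) ^ q) := by
    intro ξ
    have h0 : 0 ≤ ‖FT F ξ‖ * ω ξ := mul_nonneg (norm_nonneg _) (hω ξ).le
    rw [Real.enorm_eq_ofReal h0, ENNReal.ofReal_rpow_of_nonneg h0 (by linarith)]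
  simp_rw [this]

lemma summable_iff {ι : Type*} [MeasurableSpace ι] [MeasurableSingletonClass ι] [Countable ι]
    (ω : EuclideanSpace ℝ (Fin d) → ℝ) (hω : ∀ x, 0 < ω x) (q : ℝ)
    (F : EuclideanSpace ℝ (Fin d) → ℂ) (Γ : Set (EuclideanSpace ℝ (Fin d)))
    (p : ι → EuclideanSpace ℝ (Fin d)) :
    Summable (fun k => Γ.indicator (fun ξ => (‖FT F ξ‖ * ω ξ) ^ q) (p k)) ↔
      ∫⁻ k, Γ.indicator (fun ξ => ENNReal.ofReal ((‖FT F ξ‖ * ω ξ) ^ q)) (p k) ∂Measure.count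
        < ∞ := by
  have h0 : ∀ k, 0 ≤ Γ.indicator (fun ξ => (‖FT F ξ‖ * ω ξ) ^ q) (p k) := fun k =>
    Set.indicator_nonneg (fun ξ _ => Real.rpow_nonneg (mul_nonneg (norm_nonneg _) (hω ξ).le) _) _
  have h1 : ∀ k, Γ.indicator (fun ξ => ENNReal.ofReal ((‖FT F ξ‖ * ω ξ) ^ q)) (p k) =
      ENNReal.ofReal (Γ.indicator (fun ξ => (‖FT F ξ‖ * ω ξ) ^ q) (p k)) := by
    intro k
    by_cases hk : p k ∈ Γ <;> simp [hk]
  simp_rw [h1]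
  rw [lintegral_count, lt_top_iff_ne_top]
  constructor
  · intro h; exact h.tsum_ofReal_ne_top
  · intro h
    refine (ENNReal.summable_toReal h).congr fun k => ?_
    rw [ENNReal.toReal_ofReal (h0 k)]

lemma box_support {φ : EuclideanSpace ℝ (Fin d) → ℂ} (h : HasCompactSupport φ) :
    ∃ (A : Matrix (Fin d) (Fin d) ℝ) (x₁ : EuclideanSpace ℝ (Fin d)), IsUnit A.det ∧
      tsupport φ ⊆ interior (lattPara A x₁) := by
  obtain ⟨ρ, hρ⟩ := h.isBounded.exists_norm_le
  set R : ℝ := 2 * (|ρ| + 1) with hR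
  have hRpos : 0 < R := by positivity
  refine ⟨R • 1, toE (fun _ => -R / 2), ?_, ?_⟩
  · rw [Matrix.det_smul, Matrix.det_one, mul_one]
    exact isUnit_iff_ne_zero.mpr (by positivity)
  have hopen : Metric.ball (0 : EuclideanSpace ℝ (Fin d)) (R / 2) ⊆
      lattPara (R • 1) (toE (fun _ => -R / 2)) := by
    intro x hx
    rw [mem_ball_zero_iff] at hx
    have hxi : ∀ i, |x i| < R / 2 := fun i => (PiLp.norm_apply_le x i).trans_lt hx
    refine ⟨fun i => (x i + R / 2) / R, ?_, ?_⟩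
    · intro i _
      have := abs_lt.mp (hxi i)
      constructor
      · exact div_nonneg (by linarith) hRpos.le
      · rw [div_le_one hRpos]; linarith
    · ext i
      simp only [Matrix.smul_mulVec, Matrix.one_mulVec]
      rw [PiLp.add_apply, toE_apply, toE_apply, Pi.smul_apply, smul_eq_mul]
      field_simp
      ring
  intro x hx
  refine interior_maximal hopen Metric.isOpen_ball ?_
  rw [mem_ball_zero_iff]
  have := hρ x hx
  have := le_abs_self ρ
  linarith

lemma forward (s q : ℝ) (hs : 1 < s) (hq : 1 ≤ q)
    (ω : EuclideanSpace ℝ (Fin d) → ℝ) (hω : IsSAdmissible s ω)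
    (f : EuclideanSpace ℝ (Fin d) → ℂ) (hf : Integrable f)
    (x₀ ξ₀ : EuclideanSpace ℝ (Fin d))
    (φ : EuclideanSpace ℝ (Fin d) → ℂ) (h : IsSCutoff s φ) (h0 : φ x₀ ≠ 0)
    (Γ : Set (EuclideanSpace ℝ (Fin d))) (hΓo : IsOpen Γ) (hΓ : IsCone Γ) (hξ : ξ₀ ∈ Γ)
    (hfin : FLSemi ω (ENNReal.ofReal q) (fun x => φ x * f x) Γ ≠ ∞) :
      ∃ (A : Matrix (Fin d) (Fin d) ℝ) (_ : IsUnit A.det) (c : ℝ) (_ : 0 < c)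
        (_ : c < 2 * Real.pi) (x₁ : EuclideanSpace ℝ (Fin d))
        (φ : EuclideanSpace ℝ (Fin d) → ℂ), IsSCutoff s φ ∧ φ x₀ ≠ 0 ∧
          tsupport φ ⊆ interior (lattPara A x₁) ∧
          ∃ Γ : Set (EuclideanSpace ℝ (Fin d)), IsOpen Γ ∧ IsCone Γ ∧ ξ₀ ∈ Γ ∧
            Summable fun k : Fin d → ℤ =>
              Γ.indicator (fun ξ => (‖FT (fun x => φ x * f x) ξ‖ * ω ξ) ^ q)
                (dualLatPt A c k) := by
  obtain ⟨A, x₁, hA, hsub⟩ := box_support h.2.1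
  obtain ⟨L, M, -, hM, -⟩ := exists_LM A hA 1 one_pos
  have hg : Integrable fun x => φ x * f x := cutoff_mul_integrable h hf
  refine ⟨A, hA, 1, one_pos, by linarith [Real.pi_gt_three], x₁, fun x => φ x * φ x,
    cutoff_sq hs h, mul_ne_zero h0 h0,
    (closure_mono (Function.support_mul_subset_left φ φ)).trans hsub, ?_⟩
  obtain ⟨CH, hCH, hH⟩ := conv_bound hs h hg
  obtain ⟨B, hB, hB'⟩ := ker_unif_lattice hs M
  have hfeq : (fun x => φ x * φ x * f x) = fun x => φ x * (φ x * f x) := by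
    funext x; ring
  have := transfer (volume : Measure (EuclideanSpace ℝ (Fin d)))
    (Measure.count : Measure (Fin d → ℤ)) id (dualLatPt A 1) measurable_id
    (measurable_of_countable _) s q hs hq (ker_unif_volume hs)
    ⟨B, hB, fun ξ => by simp_rw [hM]; exact hB' ξ⟩ ω hω
    (FT fun x => φ x * f x) (FT fun x => φ x * φ x * f x) (FT_continuous hg).measurable
    _ (FT_norm_le _) (fun ξ => ‖FT φ ξ‖) (fun _ => norm_nonneg _) h.2.2 CH hCH
    (fun y => by rw [hfeq]; exact hH _) Γ hΓo hΓ ξ₀ hξ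
    ((FLSemi_iff ω hω.2.1 q hq _ Γ hΓo).mp hfin)
  obtain ⟨Γ', h1, h2, h3, h4⟩ := this
  exact ⟨Γ', h1, h2, h3, (summable_iff ω hω.2.1 q _ Γ' _).mpr h4⟩

lemma backward (s q : ℝ) (hs : 1 < s) (hq : 1 ≤ q)
    (ω : EuclideanSpace ℝ (Fin d) → ℝ) (hω : IsSAdmissible s ω)
    (f : EuclideanSpace ℝ (Fin d) → ℂ) (hf : Integrable f)
    (ξ₀ : EuclideanSpace ℝ (Fin d))
    (A : Matrix (Fin d) (Fin d) ℝ) (hA : IsUnit A.det) (c : ℝ) (hc : 0 < c)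
    (hc2 : c < 2 * Real.pi) (x₁ : EuclideanSpace ℝ (Fin d))
    (φ : EuclideanSpace ℝ (Fin d) → ℂ) (h : IsSCutoff s φ)
    (hsub : tsupport φ ⊆ interior (lattPara A x₁))
    (Γ : Set (EuclideanSpace ℝ (Fin d))) (hΓo : IsOpen Γ) (hΓ : IsCone Γ) (hξ : ξ₀ ∈ Γ)
    (hfin : Summable fun k : Fin d → ℤ =>
              Γ.indicator (fun ξ => (‖FT (fun x => φ x * f x) ξ‖ * ω ξ) ^ q)
                (dualLatPt A c k)) :
    ∃ Γ' : Set (EuclideanSpace ℝ (Fin d)), IsOpen Γ' ∧ IsCone Γ' ∧ ξ₀ ∈ Γ' ∧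
      FLSemi ω (ENNReal.ofReal q) (fun x => φ x * φ x * f x) Γ' ≠ ∞ := by
  obtain ⟨L, M, hL, hM, hLM⟩ := exists_LM A hA c hc
  have hg : Integrable fun x => φ x * f x := cutoff_mul_integrable h hf
  have hpi := Real.two_pi_pos
  obtain ⟨r, hr⟩ : ∃ r : ℝ, r = c / (2 * Real.pi) := ⟨_, rfl⟩
  have hr0 : 0 < r := by rw [hr]; positivity
  have hr1 : r < 1 := by rw [hr, div_lt_one hpi]; exact hc2
  obtain ⟨δ, hδ⟩ : ∃ δ : ℝ, δ = (1 - r) / 2 := ⟨_, rfl⟩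
  have hδ0 : 0 < δ := by rw [hδ]; linarith
  have hsupp : ∀ x, φ x ≠ 0 → ∃ t : Fin d → ℝ, (∀ i, δ ≤ t i ∧ t i ≤ 1 - δ) ∧
      x = (x₁ - L (fun _ => δ)) + L t := by
    intro x hx
    obtain ⟨τ, hτ, rfl⟩ := interior_subset (hsub (subset_tsupport _ hx))
    refine ⟨(fun _ => δ) + r • τ, fun i => ?_, ?_⟩
    · have hi := hτ i (Set.mem_univ i)
      have h1 : 0 ≤ r * τ i := mul_nonneg hr0.le hi.1
      have h2 : r * τ i ≤ r := by nlinarith [hi.2]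
      simp only [Pi.add_apply, Pi.smul_apply, smul_eq_mul]
      constructor
      · linarith
      · rw [hδ]; linarith
    · rw [map_add, map_smul, hL τ, smul_smul]
      have : r * (2 * Real.pi / c) = 1 := by rw [hr]; field_simp
      rw [this, one_smul]
      simp only
      abel
  obtain ⟨CH, hCH, hH⟩ := lattice_bound hs L M hLM _ δ hδ0 h hsupp hg
    (fun x hx => by rw [hx, zero_mul])
  obtain ⟨B, hB, hB'⟩ := ker_unif_lattice hs M
  have hfeq : (fun x => φ x * φ x * f x) = fun x => φ x * (φ x * f x) := by
    funext x; ring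
  have := transfer (Measure.count : Measure (Fin d → ℤ))
    (volume : Measure (EuclideanSpace ℝ (Fin d))) (dualLatPt A c) id
    (measurable_of_countable _) measurable_id s q hs hq
    ⟨B, hB, fun ξ => by simp_rw [hM]; exact hB' ξ⟩ (ker_unif_volume hs) ω hω
    (FT fun x => φ x * f x) (FT fun x => φ x * φ x * f x) (FT_continuous hg).measurable
    _ (FT_norm_le _) (fun ξ => ‖FT φ ξ‖) (fun _ => norm_nonneg _) h.2.2 CH hCH
    (fun y => by rw [hfeq]; simp_rw [hM]; exact hH _) Γ hΓo hΓ ξ₀ hξ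
    ((summable_iff ω hω.2.1 q _ Γ _).mp hfin)
  obtain ⟨Γ', h1, h2, h3, h4⟩ := this
  exact ⟨Γ', h1, h2, h3, (FLSemi_iff ω hω.2.1 q hq _ Γ' h1).mpr h4⟩

theorem stmt19 {d : ℕ} (s q : ℝ) (hs : 1 < s) (hq : 1 ≤ q)
    (ω : EuclideanSpace ℝ (Fin d) → ℝ) (hω : IsSAdmissible s ω)
    (f : EuclideanSpace ℝ (Fin d) → ℂ) (hf : Integrable f) (hfc : HasCompactSupport f)
    (x₀ ξ₀ : EuclideanSpace ℝ (Fin d)) (hξ₀ : ξ₀ ≠ 0) :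
    (x₀, ξ₀) ∉ WF_FL s (ENNReal.ofReal q) ω f ↔
      ∃ (A : Matrix (Fin d) (Fin d) ℝ) (_ : IsUnit A.det) (c : ℝ) (_ : 0 < c)
        (_ : c < 2 * Real.pi) (x₁ : EuclideanSpace ℝ (Fin d))
        (φ : EuclideanSpace ℝ (Fin d) → ℂ), IsSCutoff s φ ∧ φ x₀ ≠ 0 ∧
          tsupport φ ⊆ interior (lattPara A x₁) ∧
          ∃ Γ : Set (EuclideanSpace ℝ (Fin d)), IsOpen Γ ∧ IsCone Γ ∧ ξ₀ ∈ Γ ∧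
            Summable fun k : Fin d → ℤ =>
              Γ.indicator (fun ξ => (‖FT (fun x => φ x * f x) ξ‖ * ω ξ) ^ q)
                (dualLatPt A c k) := by
  constructor
  · intro hn
    by_contra hcon
    apply hn
    refine ⟨hξ₀, fun φ h h0 Γ hΓo hΓ hξ => ?_⟩
    by_contra hfin
    exact hcon (forward s q hs hq ω hω f hf x₀ ξ₀ φ h h0 Γ hΓo hΓ hξ hfin)
  · rintro ⟨A, hA, c, hc, hc2, x₁, φ, h, h0, hsub, Γ, hΓo, hΓ, hξ, hfin⟩ hmem
    obtain ⟨Γ', h1, h2, h3, h4⟩ := backward s q hs hq ω hω f hf ξ₀ A hA c hc hc2 x₁ φ h hsub Γ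
      hΓo hΓ hξ hfin
    exact h4 (hmem.2 _ (cutoff_sq hs h) (mul_ne_zero h0 h0) Γ' h1 h2 h3)

end Paper
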